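/- Let $p$ and $q$ be distinct odd primes and let $E$ be the $pq$-th cyclotomic field. Let $i$ be an integer with $1 \le i \le p-3$ such that $q^i \not\equiv 1 \pmod{p}$, let $\nu$ be an integer whose residue generates $(\mathbb{Z}/p\mathbb{Z})^{\times}$, and set $U_i := U_i(\nu)$. Let $M_i := E(\alpha_{i,1}, \ldots, \alpha_{i,(q-1)/2}) \subseteq \mathbb{C}$, where for each $j$ the number $\alpha_{i,j} \in \mathbb{C}$ is a $p$-th root of $\eta'_{i,j}$. Then $U_i$ is a $p$-th power in $M_i$; that is, there exists $w \in M_i$ with $w^p = U_i$. -/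

import Mathlib

/-!
Write `e` for the standard additive character of `ℤ/p` and, modulo `p`-th powers of `K = M_i`, put
`C_b = ∏_a (1 - e(b a))^{a^i}` and `C = C_1`. Substituting `a ↦ b⁻¹ a` gives `C_b ~ C^{b^{-i}}`.

Each `η'_{i,j}` with `1 ≤ j ≤ q - 1` is a `p`-th power in `K`: for `j ≤ (q-1)/2` by the choice of
`K`, and for the other `j` through
`1 - ζ_q^{-j} e(a) = -ζ_q^{-j} e(a) (1 - ζ_q^j e(-a))`. Here `-1` and `ζ_q` are `p`-th powers in
`E`, and the powers of `ζ_p` collect to the exponent `∑ a^{i+1}`, which vanishes mod `p` since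
`i + 1 < p - 1`.

As `∏_{j<q} (1 - ζ_q^j X) = 1 - X^q`, the product of all `η'_{i,j}` is `C_q / C ~ C^{q^{-i} - 1}`.
The exponent is prime to `p` because `q^i ≢ 1`, so `C` itself is a `p`-th power in `K`. Finally
`U_i(ν) = C_ν / C` by the same vanishing of `∑ a^{i+1}`, and `C_ν ~ C^{ν^{-i}}`.
-/

/-- `ζ_m = e^{2πi/m}`. -/
noncomputable def primRoot (m : ℕ) : ℂ := Complex.exp (2 * (Real.pi : ℂ) * Complex.I / (m : ℂ))

/-- The `pq`-th cyclotomic field `E = ℚ(ζ_p, ζ_q)` as a subfield of `ℂ`. -/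
noncomputable def cycField (p q : ℕ) : IntermediateField ℚ ℂ :=
  IntermediateField.adjoin ℚ ({primRoot p, primRoot q} : Set ℂ)

/-- `η'_{i,j} = ∏_{s=0}^{p-1} (1 - ζ_q^j ζ_p^s)^{s^i}` (with `0^0 = 1`). -/
noncomputable def etaElt' (p q i j : ℕ) : ℂ :=
  ∏ s ∈ Finset.range p, (1 - primRoot q ^ j * primRoot p ^ s) ^ (s ^ i)

/-- `U_i(b) = ∏_{s=1}^{p-1} (ζ_p^{(p+1)(1-b)s/2} · (1-ζ_p^{bs})/(1-ζ_p^s))^{s^i}`. -/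
noncomputable def cycUnit (p i : ℕ) (b : ℤ) : ℂ :=
  ∏ s ∈ Finset.Icc 1 (p - 1),
    (primRoot p ^ ((((p + 1) / 2 : ℕ) : ℤ) * (1 - b) * (s : ℤ)) *
      ((1 - primRoot p ^ (b * (s : ℤ))) / (1 - primRoot p ^ s))) ^ (s ^ i)

/-! ### Powers in a subfield of `ℂ` -/

/-- `x` is the `p`-th power of an element of the subfield `K`. -/
def IsPthPower (K : Subfield ℂ) (p : ℕ) (x : ℂ) : Prop := ∃ w ∈ K, w ^ p = x

namespace IsPthPower

variable {K : Subfield ℂ} {p : ℕ} {x y : ℂ}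

theorem one : IsPthPower K p 1 := ⟨1, K.one_mem, one_pow p⟩

theorem mul (hx : IsPthPower K p x) (hy : IsPthPower K p y) : IsPthPower K p (x * y) := by
  obtain ⟨v, hv, rfl⟩ := hx
  obtain ⟨w, hw, rfl⟩ := hy
  exact ⟨v * w, K.mul_mem hv hw, mul_pow _ _ _⟩

theorem inv (hx : IsPthPower K p x) : IsPthPower K p x⁻¹ := by
  obtain ⟨v, hv, rfl⟩ := hx
  exact ⟨v⁻¹, K.inv_mem hv, inv_pow _ _⟩

theorem div (hx : IsPthPower K p x) (hy : IsPthPower K p y) : IsPthPower K p (x / y) := by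
  rw [div_eq_mul_inv]
  exact hx.mul hy.inv

theorem zpow (hx : IsPthPower K p x) (k : ℤ) : IsPthPower K p (x ^ k) := by
  obtain ⟨v, hv, rfl⟩ := hx
  refine ⟨v ^ k, zpow_mem hv k, ?_⟩
  rw [← zpow_natCast, ← zpow_natCast, ← zpow_mul, ← zpow_mul, mul_comm]

theorem pow (hx : IsPthPower K p x) (k : ℕ) : IsPthPower K p (x ^ k) := by
  simpa using hx.zpow k

theorem prod {ι : Type*} (s : Finset ι) (f : ι → ℂ) (h : ∀ a ∈ s, IsPthPower K p (f a)) :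
    IsPthPower K p (∏ a ∈ s, f a) :=
  Finset.prod_induction f _ (fun _ _ => mul) one h

theorem of_pow_mem (hx : x ∈ K) : IsPthPower K p (x ^ p) := ⟨x, hx, rfl⟩

/-- An exponent prime to `p` can be removed, by Bézout. -/
theorem of_zpow (hp : p.Prime) (hx : x ∈ K) (hx0 : x ≠ 0) {k : ℤ} (hk : ¬ (p : ℤ) ∣ k)
    (h : IsPthPower K p (x ^ k)) : IsPthPower K p x := by
  have hc : IsCoprime (p : ℤ) k :=
    (Prime.coprime_iff_not_dvd (Nat.prime_iff_prime_int.mp hp)).mpr hk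
  obtain ⟨u, v, huv⟩ := hc
  have : x = (x ^ u) ^ p * (x ^ k) ^ v := by
    rw [← zpow_natCast, ← zpow_mul, ← zpow_mul, ← zpow_add₀ hx0, mul_comm k, huv, zpow_one]
  rw [this]
  exact (of_pow_mem (zpow_mem hx u)).mul (h.zpow v)

/-- Modulo `p`-th powers only the class of an exponent mod `p` matters. For `x = 0` the quotient
is `0` or `1`. -/
theorem pow_div_pow (hp : p.Prime) (hx : x ∈ K) {m n : ℕ} (h : (m : ZMod p) = n) :
    IsPthPower K p (x ^ m / x ^ n) := by
  rcases eq_or_ne x 0 with rfl | hx0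
  · have h0 : IsPthPower K p 0 := ⟨0, K.zero_mem, zero_pow hp.ne_zero⟩
    have h01 (n : ℕ) : IsPthPower K p (0 ^ n) := by
      rcases Nat.eq_zero_or_pos n with rfl | hn
      · simpa using one
      · rwa [zero_pow hn.ne']
    exact (h01 m).div (h01 n)
  · have h2 : (p : ℤ) ∣ (m : ℤ) - n := by
      rw [← ZMod.intCast_zmod_eq_zero_iff_dvd]
      push_cast
      rw [h, sub_self]
    obtain ⟨k, hk⟩ := h2
    have : x ^ m / x ^ n = (x ^ k) ^ p := by
      rw [← zpow_natCast, ← zpow_natCast, ← zpow_natCast, ← zpow_sub₀ hx0, ← zpow_mul, hk,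
        mul_comm]
    rw [this]
    exact of_pow_mem (zpow_mem hx k)

end IsPthPower

/-! ### Twisted products over `ℤ/p` -/

/-- The product `∏_a f(a)^{a^i}` over `a ∈ ℤ/p`, with the representatives `0 ≤ a < p` used as
exponents. -/
noncomputable def twistProd (p i : ℕ) [NeZero p] (f : ZMod p → ℂ) : ℂ :=
  ∏ a : ZMod p, f a ^ (a.val ^ i)

section twistProd

variable {p i : ℕ} [NeZero p]

theorem twistProd_mul (f g : ZMod p → ℂ) :
    twistProd p i (fun a => f a * g a) = twistProd p i f * twistProd p i g := by
  simp only [twistProd, mul_pow, Finset.prod_mul_distrib]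

theorem twistProd_div (f g : ZMod p → ℂ) :
    twistProd p i (fun a => f a / g a) = twistProd p i f / twistProd p i g := by
  simp only [twistProd, div_pow, Finset.prod_div_distrib]

theorem prod_range_eq_prod_zmod (f : ℕ → ℂ) :
    ∏ s ∈ Finset.range p, f s = ∏ a : ZMod p, f a.val := by
  refine Finset.prod_nbij' (fun s => (s : ZMod p)) (fun a => a.val) ?_ ?_ ?_ ?_ ?_
  · simp
  · intro a _
    simpa using a.val_lt
  · intro s hs
    exact ZMod.val_cast_of_lt (Finset.mem_range.mp hs)
  · simp
  · intro s hs
    rw [ZMod.val_cast_of_lt (Finset.mem_range.mp hs)]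

theorem twistProd_congr (hi : i ≠ 0) {f g : ZMod p → ℂ} (h : ∀ a, a ≠ 0 → f a = g a) :
    twistProd p i f = twistProd p i g := by
  refine Finset.prod_congr rfl fun a _ => ?_
  by_cases ha : a = 0
  · simp [ha, hi]
  · rw [h a ha]

theorem twistProd_ne_zero (hi : i ≠ 0) {f : ZMod p → ℂ} (h : ∀ a, a ≠ 0 → f a ≠ 0) :
    twistProd p i f ≠ 0 := by
  refine Finset.prod_ne_zero_iff.mpr fun a _ => ?_
  by_cases ha : a = 0
  · simp [ha, hi]
  · exact pow_ne_zero _ (h a ha)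

theorem twistProd_mem {K : Subfield ℂ} {f : ZMod p → ℂ} (h : ∀ a, f a ∈ K) :
    twistProd p i f ∈ K :=
  K.prod_mem fun a _ => K.pow_mem (h a) _

/-- The substitution `a ↦ b⁻¹ a` raises the twisted product to the power `b^{-i}`, up to a `p`-th
power. -/
theorem twistProd_comp_mul (hp : p.Prime) {K : Subfield ℂ} {f : ZMod p → ℂ} (h : ∀ a, f a ∈ K)
    {b : ZMod p} (hb : b ≠ 0) :
    IsPthPower K p
      (twistProd p i (fun a => f (b * a)) / twistProd p i f ^ ((b⁻¹ : ZMod p).val ^ i)) := by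
  have := Fact.mk hp
  have h1 : twistProd p i (fun a => f (b * a)) = ∏ a : ZMod p, f a ^ ((b⁻¹ * a).val ^ i) := by
    refine Fintype.prod_equiv (Equiv.mulLeft₀ b hb) _ _ fun a => ?_
    simp [hb]
  rw [h1, twistProd, ← Finset.prod_pow, ← Finset.prod_div_distrib]
  refine IsPthPower.prod _ _ fun a _ => ?_
  rw [← pow_mul]
  refine IsPthPower.pow_div_pow hp (h a) ?_
  push_cast
  simp only [ZMod.natCast_zmod_val]
  rw [mul_pow, mul_comm]

/-- `∏_a e(c a)^{a^i} = e(c ∑ a^{i+1}) = 1`, since `i + 1 < p - 1`. -/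
theorem twistProd_stdAddChar (hp : p.Prime) (hi : i + 1 < p - 1) (c : ZMod p) :
    twistProd p i (fun a => ZMod.stdAddChar (c * a)) = 1 := by
  have := Fact.mk hp
  have h (a : ZMod p) : (ZMod.stdAddChar (c * a) : ℂ) ^ (a.val ^ i)
      = ZMod.stdAddChar (c * a ^ (i + 1)) := by
    rw [← AddChar.map_nsmul_eq_pow, nsmul_eq_mul]
    push_cast
    rw [ZMod.natCast_zmod_val]
    congr 1
    ring
  simp only [twistProd, h]
  have hsum := map_prod (ZMod.stdAddChar (N := p)).toMonoidHom
    (fun a : ZMod p => Multiplicative.ofAdd (c * a ^ (i + 1))) Finset.univ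
  simp only [AddChar.toMonoidHom_apply, toAdd_ofAdd, toAdd_prod] at hsum
  rw [← hsum, ← Finset.mul_sum, FiniteField.sum_pow_lt_card_sub_one]
  · simp
  · simpa [ZMod.card] using hi

end twistProd

/-! ### Cyclotomic numbers as twisted products -/

theorem primRoot_isPrimitiveRoot {m : ℕ} (hm : m ≠ 0) : IsPrimitiveRoot (primRoot m) m :=
  Complex.isPrimitiveRoot_exp m hm

theorem primRoot_zpow (p : ℕ) [NeZero p] (k : ℤ) :
    primRoot p ^ k = ZMod.stdAddChar (k : ZMod p) := by
  rw [ZMod.stdAddChar_coe, primRoot, ← Complex.exp_int_mul]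
  congr 1
  ring

theorem primRoot_pow_val (p : ℕ) [NeZero p] (a : ZMod p) :
    primRoot p ^ a.val = ZMod.stdAddChar a := by
  rw [← zpow_natCast, primRoot_zpow, Int.cast_natCast, ZMod.natCast_zmod_val]

theorem etaElt'_eq (p q i j : ℕ) [NeZero p] :
    etaElt' p q i j = twistProd p i (fun a => 1 - primRoot q ^ j * ZMod.stdAddChar a) := by
  rw [etaElt', prod_range_eq_prod_zmod, twistProd]
  simp only [primRoot_pow_val]

theorem cycUnit_eq (p i : ℕ) [NeZero p] (hi : i ≠ 0) (b : ℤ) :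
    cycUnit p i b = twistProd p i (fun a =>
      ZMod.stdAddChar ((((p + 1) / 2 : ℕ) * (1 - b : ℤ) : ZMod p) * a) *
        ((1 - ZMod.stdAddChar ((b : ZMod p) * a)) / (1 - ZMod.stdAddChar a))) := by
  have hset : Finset.Icc 1 (p - 1) = (Finset.range p).erase 0 := by
    ext s
    have := NeZero.pos p
    simp only [Finset.mem_Icc, Finset.mem_erase, Finset.mem_range]
    omega
  rw [cycUnit, hset, Finset.prod_erase _ (by simp [hi]), prod_range_eq_prod_zmod, twistProd]
  refine Finset.prod_congr rfl fun a _ => ?_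
  rw [primRoot_zpow, primRoot_zpow, primRoot_pow_val]
  simp only [Int.cast_mul, Int.cast_sub, Int.cast_one, Int.cast_natCast, ZMod.natCast_zmod_val]

/-- The reflection `j ↦ -j`: for `x = ζ_q^j`, if the twisted product at `x` is a `p`-th power, so is the
one at `x⁻¹`. -/
theorem twistProd_reflect {p i : ℕ} [NeZero p] (hp : p.Prime) (hpo : Odd p) (hi : i + 1 < p - 1)
    {K : Subfield ℂ} (hK : ∀ a : ZMod p, (ZMod.stdAddChar a : ℂ) ∈ K) {x : ℂ} (hx : x ∈ K)
    (hx0 : x ≠ 0) (hxp : IsPthPower K p x) (hne : ∀ a : ZMod p, 1 - x * ZMod.stdAddChar a ≠ 0)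
    (h : IsPthPower K p (twistProd p i (fun a => 1 - x * ZMod.stdAddChar a))) :
    IsPthPower K p (twistProd p i (fun a => 1 - x⁻¹ * ZMod.stdAddChar a)) := by
  have := Fact.mk hp
  have hf (a : ZMod p) : (1 : ℂ) - x⁻¹ * ZMod.stdAddChar a
      = (-x⁻¹ * ZMod.stdAddChar (1 * a)) * (1 - x * ZMod.stdAddChar ((-1) * a)) := by
    have : (ZMod.stdAddChar a : ℂ) * ZMod.stdAddChar (-a) = 1 := by
      rw [← AddChar.map_add_eq_mul]
      simp
    rw [one_mul, neg_one_mul]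
    have hxx : x⁻¹ * x = 1 := inv_mul_cancel₀ hx0
    linear_combination -(ZMod.stdAddChar a : ℂ) * ZMod.stdAddChar (-a) * hxx - this
  simp only [hf]
  rw [twistProd_mul, twistProd_mul, twistProd_stdAddChar hp hi, mul_one]
  have hneg : IsPthPower K p (-x⁻¹) := by
    obtain ⟨w, hw, hwx⟩ := hxp.inv
    exact ⟨-w, K.neg_mem hw, by rw [hpo.neg_pow, hwx]⟩
  refine (IsPthPower.prod _ _ fun a _ => hneg.pow _).mul ?_
  have hmem (a : ZMod p) : 1 - x * ZMod.stdAddChar a ∈ K :=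
    K.sub_mem K.one_mem (K.mul_mem hx (hK a))
  have h1 := twistProd_comp_mul (i := i) hp hmem (b := -1) (by simp)
  have h2 := h1.mul (h.pow (((-1 : ZMod p)⁻¹).val ^ i))
  rwa [div_mul_cancel₀] at h2
  exact pow_ne_zero _ (Finset.prod_ne_zero_iff.mpr fun a _ => pow_ne_zero _ (hne a))

/-- The distribution relation `∏_{1 ≤ j < q} (1 - ζ_q^j z) · (1 - z) = 1 - z^q`. -/
theorem prod_one_sub_primRoot {q : ℕ} (hq : 0 < q) (z : ℂ) :
    (∏ j ∈ Finset.Icc 1 (q - 1), (1 - primRoot q ^ j * z)) * (1 - z) = 1 - z ^ q := by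
  have hset : Finset.Icc 1 (q - 1) = (Finset.range q).erase 0 := by
    ext s
    simp only [Finset.mem_Icc, Finset.mem_erase, Finset.mem_range]
    omega
  have hζ := primRoot_isPrimitiveRoot hq.ne'
  have h := hζ.pow_sub_pow_eq_prod_sub_mul 1 z hq
  rw [one_pow] at h
  have h0 : (1 : ℂ) - z = 1 - primRoot q ^ 0 * z := by rw [pow_zero, one_mul]
  rw [h, hset, h0, Finset.prod_erase_mul _ _ (Finset.mem_range.mpr hq)]
  refine Finset.prod_nbij (fun j => primRoot q ^ j) ?_ ?_ ?_ fun _ _ => rfl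
  · intro j _
    rw [Polynomial.mem_nthRootsFinset hq, ← pow_mul, mul_comm, pow_mul, hζ.pow_eq_one, one_pow]
  · intro a ha b hb hab
    exact hζ.pow_inj (by simpa using ha) (by simpa using hb) hab
  · intro ξ hξ
    have := NeZero.mk hq.ne'
    obtain ⟨j, hj, rfl⟩ :=
      hζ.eq_pow_of_pow_eq_one ((Polynomial.mem_nthRootsFinset hq _).mp hξ)
    exact ⟨j, by simpa using hj, rfl⟩

/-! ### The `p`-th power property -/

/-- The theorem for an arbitrary subfield `K` containing `ζ_p`, `ζ_q` in which `η'_{i,j}` is a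
`p`-th power for `1 ≤ j ≤ (q-1)/2`. -/
theorem cycUnit_isPthPower {p q i : ℕ} (hp : p.Prime) (hq : q.Prime) (hpo : Odd p) (hqo : Odd q)
    (hpq : p ≠ q) (hi0 : i ≠ 0) (hi : i + 1 < p - 1) (hqi : ¬ (p : ℤ) ∣ ((q : ℤ) ^ i - 1))
    {ν : ℤ} (hν : (ν : ZMod p) ≠ 0) {K : Subfield ℂ} (hKp : primRoot p ∈ K)
    (hKq : primRoot q ∈ K)
    (hη : ∀ j, 1 ≤ j → j ≤ (q - 1) / 2 → IsPthPower K p (etaElt' p q i j)) :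
    IsPthPower K p (cycUnit p i ν) := by
  have := Fact.mk hp
  have hζq := primRoot_isPrimitiveRoot hq.ne_zero
  have hq0 : primRoot q ≠ 0 := hζq.ne_zero hq.ne_zero
  have hK (a : ZMod p) : (ZMod.stdAddChar a : ℂ) ∈ K := by
    rw [← primRoot_pow_val]
    exact K.pow_mem hKp _
  have hqp : IsPthPower K p (primRoot q) := by
    refine IsPthPower.of_zpow hp hKq hq0 (k := q) ?_ ?_
    · rw [Int.natCast_dvd_natCast, Nat.prime_dvd_prime_iff_eq hp hq]
      exact hpq
    · rw [zpow_natCast, hζq.pow_eq_one]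
      exact IsPthPower.one
  have hall : ∀ j ∈ Finset.Icc 1 (q - 1),
      IsPthPower K p (twistProd p i (fun a => 1 - primRoot q ^ j * ZMod.stdAddChar a)) := by
    intro j hj
    rw [Finset.mem_Icc] at hj
    by_cases hj2 : j ≤ (q - 1) / 2
    · rw [← etaElt'_eq]
      exact hη j hj.1 hj2
    · obtain ⟨t, rfl⟩ := hqo
      have hk1 : 1 ≤ 2 * t + 1 - j := by omega
      have hk2 : 2 * t + 1 - j ≤ (2 * t + 1 - 1) / 2 := by omega
      have hk := hη _ hk1 hk2
      rw [etaElt'_eq] at hk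
      have hinv : primRoot (2 * t + 1) ^ j = (primRoot (2 * t + 1) ^ (2 * t + 1 - j))⁻¹ := by
        rw [← mul_eq_one_iff_eq_inv₀ (pow_ne_zero _ hq0), ← pow_add,
          Nat.add_sub_cancel' (by omega), hζq.pow_eq_one]
      rw [hinv]
      refine twistProd_reflect hp hpo hi hK (K.pow_mem hKq _) (pow_ne_zero _ hq0) (hqp.pow _)
        ?_ hk
      -- A relation `ζ_q^k e(a) = 1` would give `ζ_q^{kp} = 1`, so `q ∣ k p`.
      intro a ha
      have h1 : (primRoot (2 * t + 1) ^ (2 * t + 1 - j) * ZMod.stdAddChar a) ^ p = 1 := by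
        rw [← sub_eq_zero.mp ha, one_pow]
      have h2 : (ZMod.stdAddChar a : ℂ) ^ p = 1 := by
        rw [← AddChar.map_nsmul_eq_pow]
        simp
      rw [mul_pow, h2, mul_one, ← pow_mul, hζq.pow_eq_one_iff_dvd, hq.dvd_mul] at h1
      rcases h1 with h1 | h1
      · exact absurd (Nat.le_of_dvd (by omega) h1) (by omega)
      · exact hpq ((Nat.prime_dvd_prime_iff_eq hq hp).mp h1).symm
  set C : ZMod p → ℂ := fun b => twistProd p i (fun a => 1 - ZMod.stdAddChar (b * a)) with hC
  have hne (a : ZMod p) (ha : a ≠ 0) : (1 : ℂ) - ZMod.stdAddChar a ≠ 0 := by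
    rw [sub_ne_zero]
    intro h
    exact ha (ZMod.injective_stdAddChar (by rw [← h, AddChar.map_zero_eq_one]))
  have hC0 (b : ZMod p) (hb : b ≠ 0) : C b ≠ 0 :=
    twistProd_ne_zero hi0 fun a ha => hne _ (mul_ne_zero hb ha)
  have hmem (a : ZMod p) : (1 : ℂ) - ZMod.stdAddChar a ∈ K := K.sub_mem K.one_mem (hK a)
  have hCmem : C 1 ∈ K := twistProd_mem fun a => hmem _
  have hCb (b : ZMod p) (hb : b ≠ 0) : IsPthPower K p (C b / C 1 ^ ((b⁻¹ : ZMod p).val ^ i)) := by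
    have := twistProd_comp_mul (i := i) hp hmem hb
    simpa only [hC, one_mul] using this
  have hqz : (q : ZMod p) ≠ 0 := by
    rw [Ne, ZMod.natCast_eq_zero_iff, Nat.prime_dvd_prime_iff_eq hp hq]
    exact hpq
  have hprod : (∏ j ∈ Finset.Icc 1 (q - 1),
      twistProd p i (fun a => 1 - primRoot q ^ j * ZMod.stdAddChar a)) * C 1 = C q := by
    simp only [hC, twistProd]
    rw [Finset.prod_comm, ← Finset.prod_mul_distrib]
    refine Finset.prod_congr rfl fun a _ => ?_
    rw [Finset.prod_pow, ← mul_pow, one_mul, prod_one_sub_primRoot hq.pos,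
      ← AddChar.map_nsmul_eq_pow, nsmul_eq_mul]
  have hCqC : IsPthPower K p (C q / C 1) := by
    rw [← hprod, mul_div_cancel_right₀ _ (hC0 1 one_ne_zero)]
    exact IsPthPower.prod _ _ hall
  have hC1 : IsPthPower K p (C 1) := by
    refine IsPthPower.of_zpow hp hCmem (hC0 1 one_ne_zero)
      (k := ((((q : ZMod p)⁻¹).val ^ i : ℕ) : ℤ) - 1) ?_ ?_
    · rw [← ZMod.intCast_zmod_eq_zero_iff_dvd] at hqi ⊢
      push_cast at hqi ⊢
      rw [ZMod.natCast_zmod_val, inv_pow, sub_eq_zero, inv_eq_one]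
      rwa [sub_eq_zero] at hqi
    · rw [zpow_sub_one₀ (hC0 1 one_ne_zero), zpow_natCast]
      have := hCqC.div (hCb q hqz)
      have h1 := hC0 q hqz
      have h2 := hC0 1 one_ne_zero
      convert this using 1
      field_simp
  rw [cycUnit_eq p i hi0, twistProd_mul, twistProd_stdAddChar hp hi, one_mul, twistProd_div]
  have hCν : IsPthPower K p (C ν) := by
    have := (hCb ν hν).mul (hC1.pow (((ν : ZMod p)⁻¹).val ^ i))
    rwa [div_mul_cancel₀ _ (pow_ne_zero _ (hC0 1 one_ne_zero))] at this
  have := hCν.div hC1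
  simpa only [hC, one_mul] using this

/-- For distinct odd primes `p, q`, `1 ≤ i ≤ p-3` with
`q^i ≢ 1 (mod p)`, `ν` a generator of `(ℤ/pℤ)^×`, and `α_{i,j}` `p`-th roots of
the `η'_{i,j}`, the unit `U_i = U_i(ν)` is a `p`-th power in
`M_i = E(α_{i,1}, …, α_{i,(q-1)/2})`. -/
theorem cycUnit_pth_power_in_Mi (p q : ℕ) (hp : p.Prime) (hq : q.Prime)
    (hpo : Odd p) (hqo : Odd q) (hpq : p ≠ q)
    (i : ℕ) (hi1 : 1 ≤ i) (hi : i ≤ p - 3)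
    (hqi : ¬ (p : ℤ) ∣ ((q : ℤ) ^ i - 1))
    (ν : ℤ) (hν : ∀ a : ZMod p, a ≠ 0 → ∃ k : ℕ, ((ν : ZMod p)) ^ k = a)
    (α : ℕ → ℂ) (hα : ∀ j, 1 ≤ j → j ≤ (q - 1) / 2 → α j ^ p = etaElt' p q i j) :
    ∃ w : ℂ,
      w ∈ IntermediateField.adjoin (cycField p q) (α '' Set.Icc 1 ((q - 1) / 2)) ∧
      w ^ p = cycUnit p i ν := by
  have := Fact.mk hp
  have hν0 : (ν : ZMod p) ≠ 0 := by
    intro h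
    -- The powers of `0` are `0` and `1`, so they miss `-1`.
    obtain ⟨k, hk⟩ := hν (-1) (by simp)
    have : Fact (2 < p) := ⟨by omega⟩
    rw [h] at hk
    rcases Nat.eq_zero_or_pos k with rfl | hk0
    · rw [pow_zero] at hk
      exact ZMod.neg_one_ne_one hk.symm
    · rw [zero_pow hk0.ne'] at hk
      simp at hk
  set M := IntermediateField.adjoin (cycField p q) (α '' Set.Icc 1 ((q - 1) / 2)) with hM
  have hE (x : ℂ) (hx : x ∈ cycField p q) : x ∈ M := M.algebraMap_mem ⟨x, hx⟩
  refine cycUnit_isPthPower (K := M.toSubfield) hp hq hpo hqo hpq (by omega) (by omega) hqi hν0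
    (hE _ (IntermediateField.subset_adjoin _ _ (by simp)))
    (hE _ (IntermediateField.subset_adjoin _ _ (by simp))) fun j h1 h2 => ?_
  exact ⟨α j, IntermediateField.subset_adjoin _ _ ⟨j, ⟨h1, h2⟩, rfl⟩, hα j h1 h2⟩
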